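/- If u is κ-harmonic in ℝ^{d+1}₊, then at every point (x,y) ∈ ℝ^{d+1}₊ with x regular, Δ_κ(u²)(x,y) = 2|∇u(x,y)|² + 2∑_{α∈R₊} κ(α) ((u(x,y) − u(σ_α(x),y))/⟨α,x⟩)², where ∇ = (∂_{x_1},…,∂_{x_d},∂_y) is the full (d+1)-dimensional gradient. In particular Δ_κ(u²) ≥ 0 at all such points. -/

import Mathlib

/-!
The failure of `Δ_κ` to be a derivation has two sources. The Laplacian contributes the cross terms
of the Leibniz rule, which give `2⟨∇u, ∇v⟩`; the drift `∂_α/⟨α,x⟩` is a derivation and contributes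
nothing; and for the reflection part, writing `u' = u ∘ σ_α` and `v' = v ∘ σ_α`,
`uv - u'v' = u(v - v') + v(u - u') - (u - u')(v - v')`.
Thus `Δ_κ(uv) = u Δ_κv + v Δ_κu + 2Γ_κ(u, v)`, where `Γ_κ(u, u)` is a combination of squares with
nonnegative coefficients. For `u = v` harmonic only `2Γ_κ(u, u)` survives.
-/

open MeasureTheory Filter Metric
open scoped RealInnerProductSpace Topology

noncomputable section

/-- Euclidean space `ℝ^d`. -/
abbrev Ed (d : ℕ) : Type := EuclideanSpace ℝ (Fin d)

/-- The reflection `σ_α(x) = x - ⟨α,x⟩α` (for roots normalized by `⟨α,α⟩ = 2`). -/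
def reflAt {d : ℕ} (α x : Ed d) : Ed d := x - ⟪α, x⟫ • α

/-- The reflection group `G` generated by the reflections `σ_α`, `α ∈ R`, realized as the
submonoid of self-maps of `ℝ^d` generated by the reflections (each reflection is an
involution, so this is in fact a group of transformations). -/
def dunklGroup {d : ℕ} (R : Finset (Ed d)) : Submonoid (Function.End (Ed d)) :=
  Submonoid.closure {f : Function.End (Ed d) | ∃ α ∈ R, f = reflAt α}

/-- A (normalized) root system `R` with positive subsystem `Rp` and
`G`-invariant nonnegative multiplicity function `κ`. -/
structure IsRootSystem {d : ℕ} (R Rp : Finset (Ed d)) (κ : Ed d → ℝ) : Prop where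
  nonzero : ∀ α ∈ R, α ≠ (0 : Ed d)
  norm_two : ∀ α ∈ R, ⟪α, α⟫ = (2 : ℝ)
  refl_mem : ∀ α ∈ R, ∀ β ∈ R, reflAt α β ∈ R
  pos_sub : Rp ⊆ R
  pos_split : ∀ α ∈ R, (α ∈ Rp ∧ ¬(-α ∈ Rp)) ∨ (¬(α ∈ Rp) ∧ -α ∈ Rp)
  kappa_nonneg : ∀ α ∈ R, 0 ≤ κ α
  kappa_inv : ∀ σ ∈ dunklGroup R, ∀ α ∈ R, κ (σ α) = κ α

/-- `x ∈ ℝ^d` is regular if `⟨α,x⟩ ≠ 0` for all roots `α ∈ R`. -/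
def isRegular {d : ℕ} (R : Finset (Ed d)) (x : Ed d) : Prop :=
  ∀ α ∈ R, ⟪α, x⟫ ≠ (0 : ℝ)

/-- Second directional derivative of `u` at `p` in direction `v`. -/
def pd2 {d : ℕ} (u : Ed d × ℝ → ℝ) (p v : Ed d × ℝ) : ℝ :=
  fderiv ℝ (fun q => fderiv ℝ u q v) p v

/-- The Euclidean Laplacian on `ℝ^{d+1} = ℝ^d × ℝ`. -/
def lapE {d : ℕ} (u : Ed d × ℝ → ℝ) (p : Ed d × ℝ) : ℝ :=
  (∑ i : Fin d, pd2 u p (EuclideanSpace.single i 1, 0)) + pd2 u p (0, 1)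

/-- The Dunkl Laplacian `Δ_κ` on `ℝ^{d+1}` (the Dunkl operators act in the `x`-variables). -/
def dunklLap {d : ℕ} (Rp : Finset (Ed d)) (κ : Ed d → ℝ) (u : Ed d × ℝ → ℝ)
    (p : Ed d × ℝ) : ℝ :=
  lapE u p + 2 * ∑ α ∈ Rp, κ α *
    (fderiv ℝ u p (α, 0) / ⟪α, p.1⟫ - (u p - u (reflAt α p.1, p.2)) / ⟪α, p.1⟫ ^ 2)

/-- The open upper half-space `ℝ^{d+1}₊`. -/
def upperHS (d : ℕ) : Set (Ed d × ℝ) := {p | 0 < p.2}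

/-- `u` is `κ`-harmonic on `Ω`: `u` is `C²` on `Ω` and `Δ_κ u = 0` at every point of `Ω`
whose `x`-coordinate is regular. -/
def KHarmonicOn {d : ℕ} (R Rp : Finset (Ed d)) (κ : Ed d → ℝ) (u : Ed d × ℝ → ℝ)
    (Ω : Set (Ed d × ℝ)) : Prop :=
  ContDiffOn ℝ 2 u Ω ∧ ∀ p ∈ Ω, isRegular R p.1 → dunklLap Rp κ u p = 0

/-- The cone `Γ_a(x)` of aperture `a` with vertex `(x,0)`. -/
def cone {d : ℕ} (a : ℝ) (x : Ed d) : Set (Ed d × ℝ) :=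
  {p | 0 < p.2 ∧ dist p.1 x < a * p.2}

/-- The truncated cone `Γ_a^h(x)`. -/
def coneT {d : ℕ} (a h : ℝ) (x : Ed d) : Set (Ed d × ℝ) :=
  {p | 0 < p.2 ∧ p.2 < h ∧ dist p.1 x < a * p.2}

/-- `u` has a finite non-tangential limit at `(x,0)`. -/
def HasNTLimit {d : ℕ} (u : Ed d × ℝ → ℝ) (x : Ed d) : Prop :=
  ∀ a > (0 : ℝ), ∃ L : ℝ, Tendsto u (𝓝[cone a x] (x, (0 : ℝ))) (𝓝 L)

/-- `u` is non-tangentially bounded at `(x,0)`. -/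
def NTBounded {d : ℕ} (u : Ed d × ℝ → ℝ) (x : Ed d) : Prop :=
  ∃ a > (0 : ℝ), ∃ h > (0 : ℝ), ∃ M : ℝ, ∀ p ∈ coneT a h x, |u p| ≤ M

/-- A subset of `ℝ^d` is `G`-invariant. -/
def GInvSet {d : ℕ} (R : Finset (Ed d)) (E : Set (Ed d)) : Prop :=
  ∀ σ ∈ dunklGroup R, σ '' E = E

section SecondDerivative

variable {𝕜 E A : Type*} [NontriviallyNormedField 𝕜] [NormedAddCommGroup E] [NormedSpace 𝕜 E]
  [NormedCommRing A] [NormedAlgebra 𝕜 A] {u v : E → A} {p : E}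

theorem fderiv_mul_apply (hu : DifferentiableAt 𝕜 u p) (hv : DifferentiableAt 𝕜 v p) (a : E) :
    fderiv 𝕜 (fun q => u q * v q) p a = u p * fderiv 𝕜 v p a + v p * fderiv 𝕜 u p a := by
  simp [fderiv_fun_mul hu hv]

theorem differentiableAt_fderiv_apply {F : Type*} [NormedAddCommGroup F] [NormedSpace 𝕜 F]
    {f : E → F} (hf : ContDiffAt 𝕜 2 f p) (a : E) :
    DifferentiableAt 𝕜 (fun q => fderiv 𝕜 f q a) p :=
  ((hf.fderiv_right (m := 1) (by norm_num)).differentiableAt one_ne_zero).clm_apply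
    (differentiableAt_const a)

theorem fderiv_fderiv_mul_apply (hu : ContDiffAt 𝕜 2 u p) (hv : ContDiffAt 𝕜 2 v p) (a b : E) :
    fderiv 𝕜 (fun q => fderiv 𝕜 (fun z => u z * v z) q a) p b =
      u p * fderiv 𝕜 (fun q => fderiv 𝕜 v q a) p b +
        v p * fderiv 𝕜 (fun q => fderiv 𝕜 u q a) p b +
        (fderiv 𝕜 u p a * fderiv 𝕜 v p b + fderiv 𝕜 u p b * fderiv 𝕜 v p a) := by
  have leibniz : (fun q => fderiv 𝕜 (fun z => u z * v z) q a) =ᶠ[𝓝 p]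
      fun q => u q * fderiv 𝕜 v q a + v q * fderiv 𝕜 u q a := by
    filter_upwards [hu.eventually (by simp), hv.eventually (by simp)] with q huq hvq
    exact fderiv_mul_apply (huq.differentiableAt two_ne_zero) (hvq.differentiableAt two_ne_zero) a
  have hu₁ := hu.differentiableAt two_ne_zero
  have hv₁ := hv.differentiableAt two_ne_zero
  have hu₂ := differentiableAt_fderiv_apply hu a
  have hv₂ := differentiableAt_fderiv_apply hv a
  rw [leibniz.fderiv_eq, fderiv_fun_add (hu₁.fun_mul hv₂) (hv₁.fun_mul hu₂),
    add_apply, fderiv_mul_apply hu₁ hv₂, fderiv_mul_apply hv₁ hu₂]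
  ring

end SecondDerivative

section CarreDuChamp

variable {d : ℕ} {u v : Ed d × ℝ → ℝ} {p : Ed d × ℝ}

/-- The inner product `⟨∇u, ∇v⟩` of the full gradients on `ℝ^{d+1}`, written in coordinates because
`Ed d × ℝ` carries the sup norm and no inner product. -/
def gradInner (u v : Ed d × ℝ → ℝ) (p : Ed d × ℝ) : ℝ :=
  (∑ i : Fin d, fderiv ℝ u p (EuclideanSpace.single i 1, 0) *
      fderiv ℝ v p (EuclideanSpace.single i 1, 0)) +
    fderiv ℝ u p (0, 1) * fderiv ℝ v p (0, 1)

/-- The divided difference `(u(x,y) - u(σ_α(x),y)) / ⟨α,x⟩`, the non-local part of a Dunkl operator;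
it is `0` by convention where `⟨α,x⟩ = 0`. -/
def reflQuotient (α : Ed d) (u : Ed d × ℝ → ℝ) (p : Ed d × ℝ) : ℝ :=
  (u p - u (reflAt α p.1, p.2)) / ⟪α, p.1⟫

/-- The contribution of a single root `α` to the Dunkl Laplacian, before weighting by `2κ(α)`. -/
def dunklRootTerm (α : Ed d) (u : Ed d × ℝ → ℝ) (p : Ed d × ℝ) : ℝ :=
  fderiv ℝ u p (α, 0) / ⟪α, p.1⟫ - (u p - u (reflAt α p.1, p.2)) / ⟪α, p.1⟫ ^ 2

/-- The carré du champ `Γ_κ` of the Dunkl Laplacian, which measures the failure of `Δ_κ` to be a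
derivation; normalized so that `Γ_0(u, u) = |∇u|²`. -/
def dunklCarreDuChamp (Rp : Finset (Ed d)) (κ : Ed d → ℝ) (u v : Ed d × ℝ → ℝ)
    (p : Ed d × ℝ) : ℝ :=
  gradInner u v p + ∑ α ∈ Rp, κ α * (reflQuotient α u p * reflQuotient α v p)

theorem dunklLap_eq_lapE_add_sum (Rp : Finset (Ed d)) (κ : Ed d → ℝ) (u : Ed d × ℝ → ℝ)
    (p : Ed d × ℝ) :
    dunklLap Rp κ u p = lapE u p + 2 * ∑ α ∈ Rp, κ α * dunklRootTerm α u p :=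
  rfl

theorem pd2_mul (hu : ContDiffAt ℝ 2 u p) (hv : ContDiffAt ℝ 2 v p) (a : Ed d × ℝ) :
    pd2 (fun q => u q * v q) p a =
      u p * pd2 v p a + v p * pd2 u p a + 2 * (fderiv ℝ u p a * fderiv ℝ v p a) := by
  simp only [pd2, fderiv_fderiv_mul_apply hu hv]
  ring

theorem lapE_mul (hu : ContDiffAt ℝ 2 u p) (hv : ContDiffAt ℝ 2 v p) :
    lapE (fun q => u q * v q) p = u p * lapE v p + v p * lapE u p + 2 * gradInner u v p := by
  simp only [lapE, gradInner, pd2_mul hu hv, Finset.sum_add_distrib, ← Finset.mul_sum]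
  ring

theorem dunklRootTerm_mul (hu : DifferentiableAt ℝ u p) (hv : DifferentiableAt ℝ v p) (α : Ed d) :
    dunklRootTerm α (fun q => u q * v q) p =
      u p * dunklRootTerm α v p + v p * dunklRootTerm α u p +
        reflQuotient α u p * reflQuotient α v p := by
  simp only [dunklRootTerm, reflQuotient, fderiv_mul_apply hu hv]
  ring

theorem dunklLap_mul (Rp : Finset (Ed d)) (κ : Ed d → ℝ) (hu : ContDiffAt ℝ 2 u p)
    (hv : ContDiffAt ℝ 2 v p) :
    dunklLap Rp κ (fun q => u q * v q) p =
      u p * dunklLap Rp κ v p + v p * dunklLap Rp κ u p + 2 * dunklCarreDuChamp Rp κ u v p := by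
  have hu₁ := hu.differentiableAt two_ne_zero
  have hv₁ := hv.differentiableAt two_ne_zero
  simp only [dunklLap_eq_lapE_add_sum, dunklCarreDuChamp, lapE_mul hu hv,
    dunklRootTerm_mul hu₁ hv₁, mul_add, mul_left_comm (κ _), Finset.sum_add_distrib,
    ← Finset.mul_sum]
  ring

theorem two_mul_dunklCarreDuChamp_self (Rp : Finset (Ed d)) (κ : Ed d → ℝ) (u : Ed d × ℝ → ℝ)
    (p : Ed d × ℝ) :
    2 * dunklCarreDuChamp Rp κ u u p =
      2 * ((∑ i : Fin d, (fderiv ℝ u p (EuclideanSpace.single i 1, 0)) ^ 2) +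
          (fderiv ℝ u p ((0 : Ed d), 1)) ^ 2) +
        2 * ∑ α ∈ Rp, κ α * ((u p - u (reflAt α p.1, p.2)) / ⟪α, p.1⟫) ^ 2 := by
  simp only [dunklCarreDuChamp, gradInner, reflQuotient, sq, mul_add]

theorem dunklCarreDuChamp_self_nonneg {Rp : Finset (Ed d)} {κ : Ed d → ℝ}
    (hκ : ∀ α ∈ Rp, 0 ≤ κ α) (u : Ed d × ℝ → ℝ) (p : Ed d × ℝ) :
    0 ≤ dunklCarreDuChamp Rp κ u u p :=
  add_nonneg
    (add_nonneg (Finset.sum_nonneg fun _ _ => mul_self_nonneg _) (mul_self_nonneg _))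
    (Finset.sum_nonneg fun α hα => mul_nonneg (hκ α hα) (mul_self_nonneg _))

theorem KHarmonicOn.dunklLap_sq {R Rp : Finset (Ed d)} {κ : Ed d → ℝ} {Ω : Set (Ed d × ℝ)}
    (hu : KHarmonicOn R Rp κ u Ω) (hΩ : Ω ∈ 𝓝 p) (hp : isRegular R p.1) :
    dunklLap Rp κ (fun q => u q ^ 2) p = 2 * dunklCarreDuChamp Rp κ u u p := by
  have hC : ContDiffAt ℝ 2 u p := hu.1.contDiffAt hΩ
  simp only [sq, dunklLap_mul Rp κ hC hC, hu.2 p (mem_of_mem_nhds hΩ) hp, mul_zero, zero_add]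

theorem isOpen_upperHS (d : ℕ) : IsOpen (upperHS d) :=
  isOpen_lt continuous_const continuous_snd

end CarreDuChamp

theorem dunkl_lap_sq_identity_general
    {d : ℕ} {R Rp : Finset (Ed d)} {κ : Ed d → ℝ} (hRp : Rp ⊆ R) (hκ : ∀ α ∈ R, 0 ≤ κ α)
    {Ω : Set (Ed d × ℝ)} (hΩ : IsOpen Ω) {u : Ed d × ℝ → ℝ} (hu : KHarmonicOn R Rp κ u Ω) :
    ∀ p ∈ Ω, isRegular R p.1 →
      (dunklLap Rp κ (fun q => u q ^ 2) p =
          2 * ((∑ i : Fin d, (fderiv ℝ u p (EuclideanSpace.single i 1, 0)) ^ 2) +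
              (fderiv ℝ u p ((0 : Ed d), 1)) ^ 2) +
            2 * ∑ α ∈ Rp, κ α * ((u p - u (reflAt α p.1, p.2)) / ⟪α, p.1⟫) ^ 2) ∧
      0 ≤ dunklLap Rp κ (fun q => u q ^ 2) p := by
  intro p hp hreg
  have hΓ := hu.dunklLap_sq (hΩ.mem_nhds hp) hreg
  refine ⟨hΓ.trans (two_mul_dunklCarreDuChamp_self Rp κ u p), ?_⟩
  rw [hΓ]
  exact mul_nonneg zero_le_two (dunklCarreDuChamp_self_nonneg (fun α hα => hκ α (hRp hα)) u p)

/-- **Lemma 5.2.** If `u` is `κ`-harmonic in `ℝ^{d+1}₊`, then at every point with regular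
`x`-coordinate,
`Δ_κ(u²) = 2|∇u|² + 2 ∑_{α∈R₊} κ(α) ((u(x,y) − u(σ_α(x),y))/⟨α,x⟩)²`;
in particular `Δ_κ(u²) ≥ 0` at all such points. -/
theorem dunkl_lap_sq_identity
    {d : ℕ} (hd : 1 ≤ d) (R Rp : Finset (Ed d)) (κ : Ed d → ℝ)
    (hRS : IsRootSystem R Rp κ)
    (u : Ed d × ℝ → ℝ) (hu : KHarmonicOn R Rp κ u (upperHS d)) :
    ∀ p ∈ upperHS d, isRegular R p.1 →
      (dunklLap Rp κ (fun q => u q ^ 2) p =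
          2 * ((∑ i : Fin d, (fderiv ℝ u p (EuclideanSpace.single i 1, 0)) ^ 2) +
              (fderiv ℝ u p ((0 : Ed d), 1)) ^ 2) +
            2 * ∑ α ∈ Rp, κ α * ((u p - u (reflAt α p.1, p.2)) / ⟪α, p.1⟫) ^ 2) ∧
      0 ≤ dunklLap Rp κ (fun q => u q ^ 2) p :=
  dunkl_lap_sq_identity_general hRS.pos_sub hRS.kappa_nonneg (isOpen_upperHS d) hu

end
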